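/- arXiv:hep-th/0412233 — 5 statements merged into one kernel-verified Lean document; each statement's English description precedes it below -/
import Mathlib

section
/- Let m > 0 and v ∈ ℝ^4, and for each k ∈ ℤ^4 set T_k(v) := ∫_0^∞ (4πt)^{-2} e^{-t m²} e^{-‖2πk - v‖²/(4t)} dt ∈ [0, ∞], where ‖·‖ is the Euclidean norm. Then Σ_{k ∈ ℤ^4} T_k(v) < ∞ if and only if v ∉ 2πℤ^4. -/
open MeasureTheory Real

/-- Euclidean norm of a vector in `ℝ^l`. -/
noncomputable def eNorm {l : ℕ} (v : Fin l → ℝ) : ℝ :=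
  Real.sqrt (∑ i, (v i) ^ 2)

lemma aux_summable (v : Fin 4 → ℝ) :
    Summable (fun k : Fin 4 → ℤ => ‖(fun i => (k i : ℝ) - v i / (2 * π))‖⁻¹ ^ 6) := by
  let L : Submodule ℤ (Fin 4 → ℝ) := Submodule.span ℤ (Set.range (Pi.basisFun ℝ (Fin 4)))
  have hr : Module.finrank ℤ L < 6 := by
    rw [ZLattice.rank ℝ L]; simp
  have h := ZLattice.summable_norm_sub_inv_pow L 6 hr (fun i => v i / (2 * π))
  have hmem : ∀ k : Fin 4 → ℤ, (fun i => (k i : ℝ)) ∈ L := by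
    intro k
    rw [Module.Basis.mem_span_iff_repr_mem]
    intro i
    exact ⟨k i, by simp⟩
  have hinj : Function.Injective (fun k : Fin 4 → ℤ => (⟨_, hmem k⟩ : L)) := by
    intro a b hab
    have h1 : (fun i => (a i : ℝ)) = (fun i => (b i : ℝ)) := congrArg Subtype.val hab
    funext i
    have h2 : (a i : ℝ) = (b i : ℝ) := congrFun h1 i
    exact_mod_cast h2
  have h3 := h.comp_injective hinj
  refine h3.congr fun k => ?_
  rfl

lemma aux_sq (w : Fin 4 → ℝ) : eNorm w ^ 2 = ∑ i, w i ^ 2 :=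
  Real.sq_sqrt (Finset.sum_nonneg fun _ _ => sq_nonneg _)

lemma aux_lower (k : Fin 4 → ℤ) (v : Fin 4 → ℝ) :
    ‖(fun i => (k i : ℝ) - v i / (2 * π))‖ ^ 2 ≤ eNorm (fun i => 2 * π * (k i : ℝ) - v i) ^ 2 := by
  have hpi := Real.pi_gt_three
  have h0 : 0 ≤ eNorm (fun i => 2 * π * (k i : ℝ) - v i) := Real.sqrt_nonneg _
  refine pow_le_pow_left₀ (norm_nonneg _) ?_ 2
  rw [pi_norm_le_iff_of_nonneg h0]
  intro i
  rw [Real.norm_eq_abs]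
  refine abs_le_of_sq_le_sq ?_ h0
  rw [aux_sq]
  have h1 : (2 * π * (k i : ℝ) - v i) ^ 2 ≤ ∑ i, (2 * π * (k i : ℝ) - v i) ^ 2 :=
    Finset.single_le_sum (f := fun i => (2 * π * (k i : ℝ) - v i) ^ 2)
      (fun _ _ => sq_nonneg _) (Finset.mem_univ i)
  have h2 : (2 * π * (k i : ℝ) - v i) = 2 * π * ((k i : ℝ) - v i / (2 * π)) := by
    field_simp
  refine le_trans ?_ h1
  rw [h2, mul_pow]
  have : 1 ≤ (2 * π) ^ 2 := by nlinarith
  nlinarith [sq_nonneg ((k i : ℝ) - v i / (2 * π))]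

lemma aux_exp (t a w E : ℝ) (ht : 0 < t) (hw : 0 < w) (hE : 0 ≤ E) (h : w ^ 2 ≤ a) :
    ((4 * π * t) ^ 2)⁻¹ * E * Real.exp (-a / (4 * t)) ≤ w⁻¹ ^ 6 * (384 * (t * E)) := by
  have ha : 0 < a := lt_of_lt_of_le (by positivity) h
  have h1 : Real.exp (-a / (4 * t)) ≤ 384 * t ^ 3 * w⁻¹ ^ 6 := by
    have hx : 0 < w ^ 2 / (4 * t) := by positivity
    have h2 := Real.pow_div_factorial_le_exp _ hx.le 3
    have h3 : Real.exp (-a / (4 * t)) ≤ Real.exp (-(w ^ 2 / (4 * t))) := by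
      rw [neg_div]; gcongr
    refine h3.trans ?_
    rw [Real.exp_neg]
    refine (inv_anti₀ (by positivity) h2).trans (le_of_eq ?_)
    simp only [Nat.factorial]
    field_simp
    norm_num
  have h4 : ((4 * π * t) ^ 2)⁻¹ ≤ (t ^ 2)⁻¹ := by
    apply inv_anti₀ (by positivity)
    have := Real.pi_gt_three
    gcongr
    nlinarith
  calc _ ≤ (t ^ 2)⁻¹ * E * (384 * t ^ 3 * w⁻¹ ^ 6) := by gcongr
    _ = _ := by field_simp

lemma aux_int (m : ℝ) (hm : 0 < m) :
    ∫⁻ t in Set.Ioi (0 : ℝ), ENNReal.ofReal (384 * (t * Real.exp (-t * m ^ 2))) < ⊤ := by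
  have h := integrableOn_rpow_mul_exp_neg_mul_rpow (p := 1) (s := 1) (b := m ^ 2)
    (by norm_num) (by norm_num) (by positivity)
  have h2 : IntegrableOn (fun t : ℝ => 384 * (t * Real.exp (-t * m ^ 2))) (Set.Ioi 0) := by
    refine IntegrableOn.congr_fun (h.const_mul 384) (fun t _ => ?_) measurableSet_Ioi
    simp only [Real.rpow_one]
    congr 3
    ring
  exact h2.lintegral_lt_top

lemma aux_div (m : ℝ) :
    ∫⁻ t in Set.Ioi (0 : ℝ), ENNReal.ofReal (((4 * π * t) ^ 2)⁻¹ * Real.exp (-t * m ^ 2)) = ⊤ := by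
  by_contra hne
  have hlt : ∫⁻ t in Set.Ioo (0 : ℝ) 1,
      ENNReal.ofReal (((4 * π * t) ^ 2)⁻¹ * Real.exp (-t * m ^ 2)) < ⊤ :=
    lt_of_le_of_lt (lintegral_mono_set Set.Ioo_subset_Ioi_self) (lt_top_iff_ne_top.mpr hne)
  have hint : IntegrableOn (fun t : ℝ => ((4 * π * t) ^ 2)⁻¹ * Real.exp (-t * m ^ 2))
      (Set.Ioo 0 1) := by
    refine ⟨by fun_prop, ?_⟩
    rw [hasFiniteIntegral_iff_ofReal (Filter.Eventually.of_forall fun t => by positivity)]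
    exact hlt
  have h2 : IntegrableOn (fun t : ℝ => t ^ (-2 : ℝ)) (Set.Ioo 0 1) := by
    refine Integrable.mono' (hint.const_mul ((4 * π) ^ 2 * Real.exp (m ^ 2))) (by fun_prop) ?_
    refine ae_restrict_of_forall_mem measurableSet_Ioo fun t ht => ?_
    have ht0 := ht.1
    rw [Real.norm_of_nonneg (by positivity), Real.rpow_neg ht0.le]
    have e1 : 1 ≤ Real.exp (m ^ 2) * Real.exp (-t * m ^ 2) := by
      rw [← Real.exp_add]
      apply Real.one_le_exp
      nlinarith [ht.2, sq_nonneg m]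
    have e2 : (4 * π) ^ 2 * Real.exp (m ^ 2) * (((4 * π * t) ^ 2)⁻¹ * Real.exp (-t * m ^ 2))
        = (t ^ 2)⁻¹ * (Real.exp (m ^ 2) * Real.exp (-t * m ^ 2)) := by
      have := Real.pi_pos
      field_simp
    rw [e2]
    have : t ^ (2 : ℝ) = t ^ 2 := by norm_cast
    rw [this]
    exact le_mul_of_one_le_right (by positivity) e1
  rw [intervalIntegral.integrableOn_Ioo_rpow_iff one_pos] at h2
  norm_num at h2

/-- The Schwinger representation of the non-planar tadpole mode sum on the
noncommutative 4-torus: `Σ_{k ∈ ℤ^4} ∫_0^∞ (4πt)^{-2} e^{-tm²} e^{-‖2πk - v‖²/4t} dt`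
is finite if and only if `v ∉ 2πℤ^4`. -/
theorem nonplanar_tadpole_finite_iff
    (m : ℝ) (hm : 0 < m) (v : Fin 4 → ℝ) :
    (∑' k : Fin 4 → ℤ,
        ∫⁻ t in Set.Ioi (0 : ℝ),
          ENNReal.ofReal (((4 * π * t) ^ 2)⁻¹ * Real.exp (-t * m ^ 2) *
            Real.exp (-(eNorm (fun i => 2 * π * (k i : ℝ) - v i)) ^ 2 / (4 * t)))) < ⊤ ↔
      ¬ ∃ k : Fin 4 → ℤ, v = fun i => 2 * π * (k i : ℝ) := by
  constructor
  · rintro h ⟨k, rfl⟩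
    refine absurd (lt_of_le_of_lt (ENNReal.le_tsum k) h) ?_
    have h0 : eNorm (fun i => 2 * π * (k i : ℝ) - 2 * π * (k i : ℝ)) = 0 := by
      simp [eNorm]
    simp only [h0]
    have := aux_div m
    simp only [ne_eq, OfNat.ofNat_ne_zero, not_false_eq_true, zero_pow, neg_zero, zero_div,
      Real.exp_zero, mul_one]
    rw [this]
    exact lt_irrefl _
  · intro hv
    have hpos : ∀ k : Fin 4 → ℤ, 0 < ‖(fun i => (k i : ℝ) - v i / (2 * π))‖ := by
      intro k
      rw [norm_pos_iff]
      intro h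
      apply hv
      refine ⟨k, funext fun i => ?_⟩
      have := congrFun h i
      simp only [Pi.zero_apply] at this
      have hp := Real.pi_pos
      field_simp at this
      linarith
    have hle : ∀ k : Fin 4 → ℤ, ∫⁻ t in Set.Ioi (0 : ℝ),
          ENNReal.ofReal (((4 * π * t) ^ 2)⁻¹ * Real.exp (-t * m ^ 2) *
            Real.exp (-(eNorm (fun i => 2 * π * (k i : ℝ) - v i)) ^ 2 / (4 * t))) ≤
        ENNReal.ofReal (‖(fun i => (k i : ℝ) - v i / (2 * π))‖⁻¹ ^ 6) *
          ∫⁻ t in Set.Ioi (0 : ℝ), ENNReal.ofReal (384 * (t * Real.exp (-t * m ^ 2))) := by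
      intro k
      rw [← lintegral_const_mul _ (by fun_prop)]
      refine setLIntegral_mono (by fun_prop) fun t ht => ?_
      rw [← ENNReal.ofReal_mul (by positivity)]
      exact ENNReal.ofReal_le_ofReal
        (aux_exp t _ _ _ ht (hpos k) (Real.exp_pos _).le (aux_lower k v))
    refine lt_of_le_of_lt (ENNReal.tsum_le_tsum hle) ?_
    rw [ENNReal.tsum_mul_right]
    exact ENNReal.mul_lt_top (aux_summable v).tsum_ofReal_lt_top (aux_int m hm)
end

section
/- Let n be an even positive integer and Θ an invertible real skew-symmetric n×n matrix. For all Schwartz functions f, g ∈ 𝒮(ℝ^n, ℂ), the Moyal product f ⋆_Θ g is again a Schwartz function, and ∫_{ℝ^n} (f ⋆_Θ g)(x) dx = ∫_{ℝ^n} f(x) g(x) dx. -/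
open MeasureTheory Real

/-- The Moyal product of two functions on `ℝ^n`, for an invertible deformation
matrix `Θ`:
`(f ⋆_Θ g)(x) = (πⁿ |det Θ|)⁻¹ ∫∫ f(x+u) g(x+v) e^{-2i⟨u, Θ⁻¹v⟩} du dv`. -/
noncomputable def moyal (n : ℕ) (Θ : Matrix (Fin n) (Fin n) ℝ)
    (f g : (Fin n → ℝ) → ℂ) : (Fin n → ℝ) → ℂ := fun x =>
  (((π ^ n * |Θ.det|)⁻¹ : ℝ) : ℂ) *
    ∫ u : Fin n → ℝ, ∫ v : Fin n → ℝ,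
      f (x + u) * g (x + v) *
        Complex.exp (-2 * Complex.I * ((∑ i, u i * Θ⁻¹.mulVec v i : ℝ) : ℂ))


open scoped SchwartzMap FourierTransform ContDiff

section MoyalAux

variable {E W F : Type} [NormedAddCommGroup E] [NormedSpace ℝ E]
  [NormedAddCommGroup W] [NormedSpace ℝ W]
  [NormedAddCommGroup F] [NormedSpace ℝ F]

/-- weighted decay -/
lemma aux_decay (f : 𝓢(E, F)) (k n : ℕ) :
    ∃ C, 0 ≤ C ∧ ∀ x, (1 + ‖x‖) ^ k * ‖iteratedFDeriv ℝ n f x‖ ≤ C := by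
  refine ⟨_, ?_, fun x => SchwartzMap.one_add_le_sup_seminorm_apply (𝕜 := ℝ) (m := (k, n))
    le_rfl le_rfl f x⟩
  positivity

/-- uniform integrable domination in the second variable -/
lemma aux_dom [MeasurableSpace W] (μ : Measure W) (H : 𝓢(E × W, F)) (k : ℕ) :
    ∃ C, 0 ≤ C ∧ ∀ x w, ‖x‖ ^ k * ‖H (x, w)‖ ≤
      C * (1 + ‖w‖) ^ (-(μ.integrablePower : ℝ)) := by
  obtain ⟨C, hC, h⟩ := aux_decay H (k + μ.integrablePower) 0
  refine ⟨C, hC, fun x w => ?_⟩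
  have h1 := h (x, w)
  rw [norm_iteratedFDeriv_zero] at h1
  have hw : (0 : ℝ) < 1 + ‖w‖ := by positivity
  rw [Real.rpow_neg hw.le, Real.rpow_natCast, ← div_eq_mul_inv, le_div_iff₀ (by positivity)]
  refine le_trans ?_ h1
  have hx : ‖x‖ ≤ 1 + ‖(x, w)‖ := by
    have := norm_fst_le (x, w)
    simp only at this
    linarith
  have hw2 : 1 + ‖w‖ ≤ 1 + ‖(x, w)‖ := by
    have := norm_snd_le (x, w)
    simp only at this
    linarith
  calc ‖x‖ ^ k * ‖H (x, w)‖ * (1 + ‖w‖) ^ μ.integrablePower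
      ≤ (1 + ‖(x, w)‖) ^ k * ‖H (x, w)‖ * (1 + ‖(x, w)‖) ^ μ.integrablePower := by gcongr
    _ = _ := by ring

/-- partial derivative in the first variable -/
noncomputable def auxD (H : 𝓢(E × W, F)) : 𝓢(E × W, E →L[ℝ] F) :=
  SchwartzMap.postcompCLM
    ((ContinuousLinearMap.compL ℝ E (E × W) F).flip (ContinuousLinearMap.inl ℝ E W))
    (SchwartzMap.fderivCLM ℝ (E × W) F H)

lemma auxD_apply (H : 𝓢(E × W, F)) (z : E × W) :
    auxD H z = (fderiv ℝ H z).comp (ContinuousLinearMap.inl ℝ E W) := rfl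

variable [MeasurableSpace W] [BorelSpace W] [FiniteDimensional ℝ W]
  (μ : Measure W) [μ.IsAddHaarMeasure]

set_option linter.unusedSectionVars false in
lemma aux_cont (H : 𝓢(E × W, F)) (x : E) : Continuous fun w => H (x, w) :=
  H.continuous.comp (by fun_prop)

lemma aux_meas (H : 𝓢(E × W, F)) (x : E) :
    AEStronglyMeasurable (fun w => H (x, w)) μ :=
  (aux_cont H x).aestronglyMeasurable

lemma aux_int_s14 (H : 𝓢(E × W, F)) (x : E) : Integrable (fun w => H (x, w)) μ := by
  obtain ⟨C, -, h⟩ := aux_dom μ H 0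
  refine (μ.integrable_pow_neg_integrablePower.const_mul C).mono'
    (aux_cont H x).aestronglyMeasurable (.of_forall fun w => by simpa using h x w)

lemma aux_hasFDerivAt (H : 𝓢(E × W, F)) (x : E) :
    HasFDerivAt (fun x => ∫ w, H (x, w) ∂μ) (∫ w, auxD H (x, w) ∂μ) x := by
  obtain ⟨C, -, h⟩ := aux_dom μ (auxD H) 0
  refine hasFDerivAt_integral_of_dominated_of_fderiv_le (s := Set.univ)
    (F' := fun x w => auxD H (x, w)) Filter.univ_mem
    (.of_forall fun x => (aux_cont H x).aestronglyMeasurable) (aux_int_s14 μ H x)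
    (aux_meas μ (auxD H) x) (.of_forall fun w x _ => by simpa using h x w)
    (μ.integrable_pow_neg_integrablePower.const_mul C) (.of_forall fun w x _ => ?_)
  have h1 : HasFDerivAt (fun x : E => (x, w)) (ContinuousLinearMap.inl ℝ E W) x :=
    hasFDerivAt_prodMk_left x w
  exact (H.hasFDerivAt (x, w)).comp x h1

lemma aux_iter (n : ℕ) : ∀ {F : Type} [NormedAddCommGroup F] [NormedSpace ℝ F]
    (H : 𝓢(E × W, F)),
    ContDiff ℝ n (fun x => ∫ w, H (x, w) ∂μ) ∧
    ∀ k : ℕ, ∃ C : ℝ, ∀ x, ‖x‖ ^ k * ‖iteratedFDeriv ℝ n (fun x => ∫ w, H (x, w) ∂μ) x‖ ≤ C := by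
  induction n with
  | zero =>
    intro F _ _ H
    refine ⟨?_, fun k => ?_⟩
    · rw [Nat.cast_zero, contDiff_zero]
      exact continuous_iff_continuousAt.2 fun x => (aux_hasFDerivAt μ H x).continuousAt
    · obtain ⟨C, hC, h⟩ := aux_dom μ H k
      refine ⟨∫ w, C * (1 + ‖w‖) ^ (-(μ.integrablePower : ℝ)) ∂μ, fun x => ?_⟩
      rw [norm_iteratedFDeriv_zero]
      calc ‖x‖ ^ k * ‖∫ w, H (x, w) ∂μ‖ ≤ ‖x‖ ^ k * ∫ w, ‖H (x, w)‖ ∂μ := by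
            gcongr; exact norm_integral_le_integral_norm _
        _ = ∫ w, ‖x‖ ^ k * ‖H (x, w)‖ ∂μ := (integral_const_mul _ _).symm
        _ ≤ _ := integral_mono ((aux_int_s14 μ H x).norm.const_mul _)
            (μ.integrable_pow_neg_integrablePower.const_mul C) (h x)
  | succ n ih =>
    intro F _ _ H
    have hf : fderiv ℝ (fun x => ∫ w, H (x, w) ∂μ) = fun x => ∫ w, auxD H (x, w) ∂μ :=
      funext fun x => (aux_hasFDerivAt μ H x).fderiv
    obtain ⟨h1, h2⟩ := ih (auxD H)
    refine ⟨?_, fun k => ?_⟩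
    · push_cast
      exact contDiff_succ_iff_hasFDerivAt.2 ⟨_, h1, aux_hasFDerivAt μ H⟩
    · obtain ⟨C, h⟩ := h2 k
      refine ⟨C, fun x => ?_⟩
      rw [← norm_iteratedFDeriv_fderiv, hf]
      exact h x

/-- Partial integration of a Schwartz function. -/
noncomputable def auxP (H : 𝓢(E × W, F)) : 𝓢(E, F) where
  toFun := fun x => ∫ w, H (x, w) ∂μ
  smooth' := contDiff_infty.2 fun n => (aux_iter μ n H).1
  decay' := fun k n => (aux_iter μ n H).2 k

lemma auxP_apply (H : 𝓢(E × W, F)) (x : E) : auxP μ H x = ∫ w, H (x, w) ∂μ := rfl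

end MoyalAux

section MoyalAux2

variable {E W : Type} [NormedAddCommGroup E] [NormedSpace ℝ E]
  [NormedAddCommGroup W] [NormedSpace ℝ W]

lemma aux_comp_decay {V : Type} [NormedAddCommGroup V] [NormedSpace ℝ V]
    (f : 𝓢(E, ℂ)) (L : V →L[ℝ] E) (hL : ‖L‖ ≤ 1) (k n : ℕ) :
    ∃ C, 0 ≤ C ∧ ∀ x, (1 + ‖L x‖) ^ k * ‖iteratedFDeriv ℝ n (fun x => f (L x)) x‖ ≤ C := by
  obtain ⟨C, hC, h⟩ := aux_decay f k n
  refine ⟨C, hC, fun x => le_trans ?_ (h (L x))⟩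
  gcongr
  have := L.iteratedFDeriv_comp_right (f.smooth ⊤) x (i := n) (by exact_mod_cast le_top)
  change ‖iteratedFDeriv ℝ n (f ∘ L) x‖ ≤ _
  rw [this]
  refine (ContinuousMultilinearMap.norm_compContinuousLinearMap_le _ _).trans ?_
  refine mul_le_of_le_one_right (norm_nonneg _) ?_
  simpa using pow_le_one₀ (norm_nonneg _) hL

/-- tensor product of Schwartz functions -/
noncomputable def auxT (f : 𝓢(E, ℂ)) (g : 𝓢(W, ℂ)) : 𝓢(E × W, ℂ) where
  toFun := fun z => f (ContinuousLinearMap.fst ℝ E W z) * g (ContinuousLinearMap.snd ℝ E W z)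
  smooth' := by
    refine ContDiff.mul ?_ ?_
    · exact (f.smooth ⊤).comp (ContinuousLinearMap.contDiff _)
    · exact (g.smooth ⊤).comp (ContinuousLinearMap.contDiff _)
  decay' := fun k n => by
    choose C hC h using fun i => aux_comp_decay f (ContinuousLinearMap.fst ℝ E W)
      (ContinuousLinearMap.norm_fst_le ..) k i
    choose C' hC' h' using fun i => aux_comp_decay g (ContinuousLinearMap.snd ℝ E W)
      (ContinuousLinearMap.norm_snd_le ..) k i
    refine ⟨∑ i ∈ Finset.range (n + 1), (n.choose i : ℝ) * C i * C' (n - i), fun z => ?_⟩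
    have key := norm_iteratedFDeriv_mul_le (𝕜 := ℝ) (N := ∞) (n := n)
      ((f.smooth ⊤).comp (ContinuousLinearMap.fst ℝ E W).contDiff)
      ((g.smooth ⊤).comp (ContinuousLinearMap.snd ℝ E W).contDiff) z (by exact_mod_cast le_top)
    have hz : ‖z‖ ≤ (1 + ‖z.1‖) * (1 + ‖z.2‖) := by
      rw [Prod.norm_def]
      have := norm_nonneg z.1
      have := norm_nonneg z.2
      apply max_le <;> nlinarith
    calc _ ≤ ((1 + ‖z.1‖) * (1 + ‖z.2‖)) ^ k * _ :=
          mul_le_mul (pow_le_pow_left₀ (norm_nonneg _) hz k) key (norm_nonneg _) (by positivity)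
      _ = ∑ i ∈ Finset.range (n + 1), (n.choose i : ℝ) *
          ((1 + ‖z.1‖) ^ k * ‖iteratedFDeriv ℝ i (f ∘ (ContinuousLinearMap.fst ℝ E W)) z‖) *
          ((1 + ‖z.2‖) ^ k *
            ‖iteratedFDeriv ℝ (n - i) (g ∘ (ContinuousLinearMap.snd ℝ E W)) z‖) := by
          rw [Finset.mul_sum]
          refine Finset.sum_congr rfl fun i _ => ?_
          rw [mul_pow]; ring
      _ ≤ _ := by
          refine Finset.sum_le_sum fun i _ => ?_
          have a := hC i
          have b := hC' (n - i)
          gcongr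
          · exact h i z
          · exact h' (n - i) z

lemma auxT_apply (f : 𝓢(E, ℂ)) (g : 𝓢(W, ℂ)) (x : E) (w : W) :
    auxT f g (x, w) = f x * g w := rfl

lemma aux_exp_s14 : Function.HasTemperateGrowth
    (fun t : ℝ => Complex.exp (((2 * π * t : ℝ) : ℂ) * Complex.I)) := by
  have hd : ∀ n : ℕ, iteratedDeriv n
      (fun t : ℝ => Complex.exp (((2 * π * t : ℝ) : ℂ) * Complex.I)) =
      fun t : ℝ => (2 * π * Complex.I) ^ n *
        Complex.exp (((2 * π * t : ℝ) : ℂ) * Complex.I) := by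
    intro n
    induction n with
    | zero => simp
    | succ n ih =>
      rw [iteratedDeriv_succ, ih]
      funext t
      have h0 : HasDerivAt (fun t : ℝ => (((2 * π * t : ℝ) : ℂ) * Complex.I))
          (((2 * π * 1 : ℝ) : ℂ) * Complex.I) t :=
        (((hasDerivAt_id t).const_mul (2 * π)).ofReal_comp).mul_const _
      rw [(h0.cexp.const_mul _).deriv]
      push_cast
      ring
  refine ⟨ContDiff.cexp (ContDiff.mul (Complex.ofRealCLM.contDiff.comp
    (contDiff_const.mul contDiff_id)) contDiff_const),
    fun n => ⟨0, (2 * π) ^ n, fun x => ?_⟩⟩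
  rw [norm_iteratedFDeriv_eq_norm_iteratedDeriv, hd, norm_mul, Complex.norm_exp_ofReal_mul_I]
  simp [abs_of_pos Real.pi_pos]

end MoyalAux2

section MoyalCore

variable {E : Type} [NormedAddCommGroup E] [InnerProductSpace ℝ E] [FiniteDimensional ℝ E]
  [MeasurableSpace E] [BorelSpace E]

/-- the shear `(x, ξ) ↦ (x + A ξ, ξ)` -/
noncomputable def auxShear (A : E →L[ℝ] E) : (E × E) ≃L[ℝ] (E × E) :=
  ContinuousLinearEquiv.equivOfInverse
    ((ContinuousLinearMap.fst ℝ E E + A.comp (ContinuousLinearMap.snd ℝ E E)).prod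
      (ContinuousLinearMap.snd ℝ E E))
    ((ContinuousLinearMap.fst ℝ E E - A.comp (ContinuousLinearMap.snd ℝ E E)).prod
      (ContinuousLinearMap.snd ℝ E E))
    (fun x => by simp) (fun x => by simp)

lemma auxShear_apply (A : E →L[ℝ] E) (x ξ : E) : auxShear A (x, ξ) = (x + A ξ, ξ) := rfl

lemma aux_phase : Function.HasTemperateGrowth
    (fun z : E × E => Complex.exp (((2 * π * inner ℝ z.1 z.2 : ℝ) : ℂ) * Complex.I)) := by
  have h : Function.HasTemperateGrowth (fun z : E × E => inner ℝ z.1 z.2) :=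
    (innerSL ℝ (E := E)).bilinear_hasTemperateGrowth
      (ContinuousLinearMap.fst ℝ E E).hasTemperateGrowth
      (ContinuousLinearMap.snd ℝ E E).hasTemperateGrowth
  exact aux_exp_s14.comp h

lemma aux_core (f g : 𝓢(E, ℂ)) (A : E →L[ℝ] E) (hA : ∀ ξ, inner ℝ (A ξ) ξ = 0) :
    ∃ h : 𝓢(E, ℂ), (∀ x, h x = ∫ ξ, Complex.exp (((2 * π * inner ℝ x ξ : ℝ) : ℂ) * Complex.I) *
        (f (x + A ξ) * 𝓕 g ξ)) ∧ ∫ x, h x = ∫ x, f x * g x := by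
  obtain ⟨H, hH⟩ : ∃ H : 𝓢(E × E, ℂ), ∀ x ξ, H (x, ξ) =
      Complex.exp (((2 * π * inner ℝ x ξ : ℝ) : ℂ) * Complex.I) * (f (x + A ξ) * 𝓕 g ξ) := by
    refine ⟨SchwartzMap.smulLeftCLM ℂ
      (fun z : E × E => Complex.exp (((2 * π * inner ℝ z.1 z.2 : ℝ) : ℂ) * Complex.I))
      (SchwartzMap.compCLMOfContinuousLinearEquiv ℂ (auxShear A) (auxT f (𝓕 g))), fun x ξ => ?_⟩
    rw [SchwartzMap.smulLeftCLM_apply_apply aux_phase]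
    rfl
  refine ⟨auxP volume H, fun x => ?_, ?_⟩
  · simp only [auxP_apply, hH]
  · simp only [auxP_apply]
    rw [integral_integral_swap (f := fun x ξ => H (x, ξ)) (H.integrable (μ := volume.prod volume))]
    have h1 : ∀ ξ, ∫ x, H (x, ξ) = 𝓕⁻ f ξ * 𝓕 g ξ := by
      intro ξ
      rw [SchwartzMap.fourierInv_coe, Real.fourierInv_eq', ← integral_mul_const]
      conv_rhs => rw [← integral_add_right_eq_self _ (A ξ)]
      refine integral_congr_ae (.of_forall fun x => ?_)
      simp only [hH, inner_add_left, hA, add_zero, smul_eq_mul]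
      ring
    simp_rw [h1]
    rw [SchwartzMap.integral_fourierInv_mul_eq, FourierTransform.fourierInv_fourier_eq]

end MoyalCore

lemma aux_cov {n : ℕ} (M : Matrix (Fin n) (Fin n) ℝ) (hM : IsUnit M.det)
    (φ : (Fin n → ℝ) → ℂ) :
    ∫ u, φ u = ((|M.det| : ℝ) : ℂ) * ∫ ξ, φ (M.mulVec ξ) := by
  have hu : IsUnit M := (Matrix.isUnit_iff_isUnit_det M).2 hM
  have hb : Function.Bijective M.mulVec :=
    ⟨Matrix.mulVec_injective_iff_isUnit.2 hu, Matrix.mulVec_surjective_iff_isUnit.2 hu⟩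
  have := integral_image_eq_integral_abs_det_fderiv_smul (volume : Measure (Fin n → ℝ))
    MeasurableSet.univ (f := M.mulVec) (f' := fun _ => (Matrix.toLin' M).toContinuousLinearMap)
    (fun x _ => (Matrix.toLin' M).toContinuousLinearMap.hasFDerivWithinAt) hb.1.injOn φ
  rw [Set.image_univ, hb.2.range_eq] at this
  simp only [Measure.restrict_univ] at this
  rw [this, ← integral_const_mul]
  refine integral_congr_ae (.of_forall fun x => ?_)
  simp [ContinuousLinearMap.det, LinearMap.det_toLin']

lemma aux_toLp {n : ℕ} (φ : EuclideanSpace ℝ (Fin n) → ℂ) :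
    ∫ x, φ x = ∫ x : Fin n → ℝ, φ (WithLp.toLp 2 x) :=
  ((PiLp.volume_preserving_toLp (Fin n)).integral_comp
    (MeasurableEquiv.toLp 2 (Fin n → ℝ)).measurableEmbedding φ).symm

/-- The Moyal product of two Schwartz functions is a Schwartz function, and
integration is a trace for the Moyal product:
`∫ (f ⋆_Θ g) = ∫ f g`. -/
theorem moyal_trace_property
    (n : ℕ) (hn : 0 < n) (he : Even n)
    (Θ : Matrix (Fin n) (Fin n) ℝ) (hskew : Θ.transpose = -Θ)
    (hdet : IsUnit Θ.det)
    (f g : SchwartzMap (Fin n → ℝ) ℂ) :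
    (∃ h : SchwartzMap (Fin n → ℝ) ℂ, ⇑h = moyal n Θ ⇑f ⇑g) ∧
      (∫ x : Fin n → ℝ, moyal n Θ (⇑f) (⇑g) x) = ∫ x : Fin n → ℝ, f x * g x := by
  set M : Matrix (Fin n) (Fin n) ℝ := (-π) • Θ with hMdef
  have hMt : M.transpose = π • Θ := by
    rw [hMdef, Matrix.transpose_smul, hskew, smul_neg, neg_smul, neg_neg]
  have hMdet : |M.det| = π ^ n * |Θ.det| := by
    rw [hMdef, Matrix.det_smul, abs_mul, abs_pow, abs_neg, abs_of_pos Real.pi_pos,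
      Fintype.card_fin]
  have hc : π ^ n * |Θ.det| ≠ 0 :=
    mul_ne_zero (pow_ne_zero _ Real.pi_ne_zero) (abs_ne_zero.2 hdet.ne_zero)
  have hMu : IsUnit M.det := by
    rw [isUnit_iff_ne_zero, ← abs_ne_zero, hMdet]; exact hc
  let e := EuclideanSpace.equiv (Fin n) ℝ
  let f' : 𝓢(EuclideanSpace ℝ (Fin n), ℂ) := SchwartzMap.compCLMOfContinuousLinearEquiv ℂ e f
  let g' : 𝓢(EuclideanSpace ℝ (Fin n), ℂ) := SchwartzMap.compCLMOfContinuousLinearEquiv ℂ e g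
  have hf' : ∀ x, f' x = f x.ofLp := fun _ => rfl
  have hg' : ∀ x, g' x = g x.ofLp := fun _ => rfl
  let A := Matrix.toEuclideanCLM (𝕜 := ℝ) M
  have hin : ∀ x y : Fin n → ℝ, inner ℝ (WithLp.toLp 2 x) (WithLp.toLp 2 y) = x ⬝ᵥ y := by
    intro x y
    rw [EuclideanSpace.inner_toLp_toLp, star_trivial, dotProduct_comm]
  have hA : ∀ ξ, inner ℝ (A ξ) ξ = 0 := by
    intro ξ
    have h1 : inner ℝ (A ξ) ξ = M.mulVec ξ.ofLp ⬝ᵥ ξ.ofLp := by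
      rw [← hin]; rfl
    have h2 : M.mulVec ξ.ofLp ⬝ᵥ ξ.ofLp = - (M.mulVec ξ.ofLp ⬝ᵥ ξ.ofLp) := by
      conv_lhs => rw [dotProduct_comm, Matrix.dotProduct_mulVec, ← Matrix.mulVec_transpose, hMt]
      rw [hMdef, neg_smul, Matrix.neg_mulVec, neg_dotProduct, neg_neg]
    rw [h1]; linarith
  obtain ⟨h, hh, htr⟩ := aux_core f' g' A hA
  have key : ∀ x : Fin n → ℝ, moyal n Θ f g x = h (WithLp.toLp 2 x) := by
    intro x
    have hF : ∀ ξ : Fin n → ℝ, 𝓕 g' (WithLp.toLp 2 ξ) =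
        ∫ v : Fin n → ℝ, Complex.exp (((-2 * π * (v ⬝ᵥ ξ) : ℝ) : ℂ) * Complex.I) * g v := by
      intro ξ
      rw [SchwartzMap.fourier_coe, Real.fourier_eq', aux_toLp]
      simp only [hin, hg', smul_eq_mul]
    rw [hh, aux_toLp, moyal, aux_cov M hMu, ← mul_assoc, hMdet, ← Complex.ofReal_mul,
      inv_mul_cancel₀ hc, Complex.ofReal_one, one_mul]
    refine integral_congr_ae (.of_forall fun ξ => ?_)
    simp only [hin, hF]
    have hfx : f' (WithLp.toLp 2 x + A (WithLp.toLp 2 ξ)) = f (x + M.mulVec ξ) := rfl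
    rw [hfx, ← integral_const_mul, ← integral_const_mul]
    conv_rhs => rw [← integral_add_left_eq_self _ x]
    refine integral_congr_ae (.of_forall fun v => ?_)
    have hs : (∑ i, M.mulVec ξ i * Θ⁻¹.mulVec v i) = π * (v ⬝ᵥ ξ) := by
      change M.mulVec ξ ⬝ᵥ Θ⁻¹.mulVec v = _
      rw [dotProduct_comm, Matrix.dotProduct_mulVec, ← Matrix.mulVec_transpose, hMt,
        Matrix.mulVec_mulVec, Matrix.smul_mul, Matrix.mul_nonsing_inv _ hdet, Matrix.smul_mulVec,
        Matrix.one_mulVec, smul_dotProduct, smul_eq_mul]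
    simp only [hs]
    have hexp : Complex.exp (-2 * Complex.I * ((π * (v ⬝ᵥ ξ) : ℝ) : ℂ)) =
        Complex.exp (((2 * π * (x ⬝ᵥ ξ) : ℝ) : ℂ) * Complex.I) *
        Complex.exp (((-2 * π * ((x + v) ⬝ᵥ ξ) : ℝ) : ℂ) * Complex.I) := by
      rw [← Complex.exp_add, add_dotProduct]
      congr 1
      push_cast
      ring
    rw [hexp]
    ring
  refine ⟨⟨SchwartzMap.compCLMOfContinuousLinearEquiv ℂ e.symm h, ?_⟩, ?_⟩
  · funext x
    rw [key]; rfl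
  · simp_rw [key]
    rw [← aux_toLp, htr, aux_toLp]
    rfl
end

section
/- Let n be an even positive integer and Θ an invertible real skew-symmetric n×n matrix. For all Schwartz functions f, g ∈ 𝒮(ℝ^n, ℂ) and all x ∈ ℝ^n, the complex conjugate satisfies conj((f ⋆_Θ g)(x)) = ((conj g) ⋆_Θ (conj f))(x); that is, complex conjugation is an involution for the Moyal product: (f ⋆_Θ g)^* = g^* ⋆_Θ f^*. -/
open MeasureTheory Real

/-- Complex conjugation is an involution for the Moyal product:
`(f ⋆_Θ g)^* = g^* ⋆_Θ f^*`. -/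
theorem moyal_conj_involution
    (n : ℕ) (hn : 0 < n) (he : Even n)
    (Θ : Matrix (Fin n) (Fin n) ℝ) (hskew : Θ.transpose = -Θ)
    (hdet : IsUnit Θ.det)
    (f g : SchwartzMap (Fin n → ℝ) ℂ) (x : Fin n → ℝ) :
    (starRingEnd ℂ) (moyal n Θ (⇑f) (⇑g) x) =
      moyal n Θ (fun y => (starRingEnd ℂ) (g y)) (fun y => (starRingEnd ℂ) (f y)) x := by
  have hinv : (Θ⁻¹).transpose = -Θ⁻¹ := by
    rw [Matrix.transpose_nonsing_inv, hskew]
    apply Matrix.inv_eq_right_inv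
    rw [neg_mul_neg, Matrix.mul_nonsing_inv _ hdet]
  have hsw : ∀ u v : Fin n → ℝ,
      (∑ i, v i * Θ⁻¹.mulVec u i : ℝ) = -(∑ i, u i * Θ⁻¹.mulVec v i : ℝ) := by
    intro u v
    change v ⬝ᵥ Θ⁻¹.mulVec u = -(u ⬝ᵥ Θ⁻¹.mulVec v)
    rw [Matrix.dotProduct_mulVec, ← Matrix.mulVec_transpose, hinv, Matrix.neg_mulVec,
      neg_dotProduct, dotProduct_comm]
  have hf : Integrable (fun u => (starRingEnd ℂ) (f (x + u))) :=
    (Complex.conjCLE.toContinuousLinearMap.integrable_comp (f.integrable.comp_add_left x))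
  have hg : Integrable (fun u => (starRingEnd ℂ) (g (x + u))) :=
    (Complex.conjCLE.toContinuousLinearMap.integrable_comp (g.integrable.comp_add_left x))
  have hfg := hg.mul_prod hf
  have hint : Integrable (fun p : (Fin n → ℝ) × (Fin n → ℝ) =>
      (starRingEnd ℂ) (g (x + p.1)) * (starRingEnd ℂ) (f (x + p.2)) *
        Complex.exp (-2 * Complex.I * ((∑ i, p.1 i * Θ⁻¹.mulVec p.2 i : ℝ) : ℂ)))
      (volume.prod volume) := by
    refine hfg.mul_bdd (c := 1) ?_ ?_
    · apply Continuous.aestronglyMeasurable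
      have : Continuous (fun p : (Fin n → ℝ) × (Fin n → ℝ) =>
          (∑ i, p.1 i * Θ⁻¹.mulVec p.2 i : ℝ)) := by
        unfold Matrix.mulVec dotProduct
        fun_prop
      fun_prop
    · filter_upwards with p
      rw [Complex.norm_exp]
      simp
  have hs := integral_integral_swap (f := fun u v : Fin n → ℝ =>
      (starRingEnd ℂ) (g (x + u)) * (starRingEnd ℂ) (f (x + v)) *
        Complex.exp (-2 * Complex.I * ((∑ i, u i * Θ⁻¹.mulVec v i : ℝ) : ℂ))) hint
  unfold moyal
  rw [map_mul, Complex.conj_ofReal, hs, ← integral_conj]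
  congr 1
  apply integral_congr_ae
  filter_upwards with u
  rw [← integral_conj]
  apply integral_congr_ae
  filter_upwards with v
  simp only [map_mul, ← Complex.exp_conj, Complex.conj_ofReal, Complex.conj_I, hsw u v, map_neg,
    Complex.ofReal_neg, Complex.conj_ofNat]
  rw [mul_comm ((starRingEnd ℂ) (f (x + u)))]
  congr 2
  ring
end

section
/- Let n be an even positive integer and Θ an invertible real skew-symmetric n×n matrix. For all Schwartz functions f, g ∈ 𝒮(ℝ^n, ℂ) and every coordinate direction j ∈ {1, …, n}, the function f ⋆_Θ g is differentiable and ∂_j(f ⋆_Θ g) = (∂_j f) ⋆_Θ g + f ⋆_Θ (∂_j g). -/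
open MeasureTheory Real

/-- Oscillating kernel. -/
noncomputable def mker (n : ℕ) (Θ : Matrix (Fin n) (Fin n) ℝ)
    (p : (Fin n → ℝ) × (Fin n → ℝ)) : ℂ :=
  Complex.exp (-2 * Complex.I * ((∑ i, p.1 i * Θ⁻¹.mulVec p.2 i : ℝ) : ℂ))

theorem mker_cont (n : ℕ) (Θ : Matrix (Fin n) (Fin n) ℝ) : Continuous (mker n Θ) := by
  unfold mker
  have h : ∀ i, Continuous fun p : (Fin n → ℝ) × (Fin n → ℝ) => Θ⁻¹.mulVec p.2 i := by
    intro i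
    exact (continuous_apply i).comp (Continuous.matrix_mulVec continuous_const continuous_snd)
  have h2 : Continuous fun p : (Fin n → ℝ) × (Fin n → ℝ) => ∑ i, p.1 i * Θ⁻¹.mulVec p.2 i :=
    continuous_finsetSum _ fun i _ => ((continuous_apply i).comp continuous_fst).mul (h i)
  exact Complex.continuous_exp.comp (continuous_const.mul (Complex.continuous_ofReal.comp h2))

theorem mker_norm (n : ℕ) (Θ : Matrix (Fin n) (Fin n) ℝ) (p) : ‖mker n Θ p‖ = 1 := by
  unfold mker
  rw [Complex.norm_exp]
  simp

theorem mker_integrable (n : ℕ) (Θ : Matrix (Fin n) (Fin n) ℝ) (a b : (Fin n → ℝ) → ℂ)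
    (ha : Integrable a) (hb : Integrable b) (x : Fin n → ℝ) :
    Integrable (fun p : (Fin n → ℝ) × (Fin n → ℝ) => a (x + p.1) * b (x + p.2) * mker n Θ p)
      (volume.prod volume) := by
  have h := (ha.comp_add_left x).mul_prod (hb.comp_add_left x)
  refine h.mul_bdd (c := 1) (mker_cont n Θ).aestronglyMeasurable ?_
  exact Filter.Eventually.of_forall fun p => (mker_norm n Θ p).le

theorem moyal_eq (n : ℕ) (Θ : Matrix (Fin n) (Fin n) ℝ) (a b : (Fin n → ℝ) → ℂ)
    (ha : Integrable a) (hb : Integrable b) (x : Fin n → ℝ) :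
    moyal n Θ a b x = (((π ^ n * |Θ.det|)⁻¹ : ℝ) : ℂ) *
      ∫ p : (Fin n → ℝ) × (Fin n → ℝ), a (x + p.1) * b (x + p.2) * mker n Θ p
        ∂(volume.prod volume) := by
  rw [integral_prod _ (mker_integrable n Θ a b ha hb x)]
  rfl

theorem schwartz_bound {n : ℕ} {F : Type*} [NormedAddCommGroup F] [NormedSpace ℝ F]
    (h : SchwartzMap (Fin n → ℝ) F) (x₀ : Fin n → ℝ) :
    ∃ B : (Fin n → ℝ) → ℝ, Integrable B ∧ (∀ u, 0 ≤ B u) ∧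
      ∀ y ∈ Metric.ball x₀ 1, ∀ u, ‖h (y + u)‖ ≤ B u := by
  set k := n + 1 with hk
  obtain ⟨C, hC⟩ : ∃ C : ℝ, ∀ z, (1 + ‖z‖) ^ k * ‖h z‖ ≤ C := by
    have H := SchwartzMap.one_add_le_sup_seminorm_apply (𝕜 := ℝ) (m := (k, 0)) (k := k) (n := 0)
      le_rfl le_rfl h
    simp only [norm_iteratedFDeriv_zero] at H
    exact ⟨_, H⟩
  set R := ‖x₀‖ + 1 with hR
  have hR0 : 0 ≤ R := by positivity
  have hC0 : 0 ≤ C := le_trans (by positivity) (hC 0)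
  refine ⟨fun u => (C * (1 + R) ^ k) * (1 + ‖u‖) ^ (-(k : ℝ)), ?_, ?_, ?_⟩
  · apply Integrable.const_mul
    apply integrable_one_add_norm
    simp [hk]
  · intro u; positivity
  · intro y hy u
    have hy' : ‖y‖ ≤ R := by
      have h1 : ‖y - x₀‖ < 1 := by simpa [dist_eq_norm] using hy
      have h2 := norm_add_le (y - x₀) x₀
      rw [sub_add_cancel] at h2
      linarith
    have hu : ‖u‖ ≤ ‖y + u‖ + ‖y‖ := by
      have := norm_sub_le (y + u) y
      simpa using this
    have hp : 1 + ‖u‖ ≤ (1 + R) * (1 + ‖y + u‖) := by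
      nlinarith [norm_nonneg (y + u), mul_nonneg hR0 (norm_nonneg (y + u))]
    have hpos : 0 < 1 + ‖u‖ := by positivity
    show _ ≤ C * (1 + R) ^ k * (1 + ‖u‖) ^ (-(k : ℝ))
    rw [Real.rpow_neg hpos.le, Real.rpow_natCast, ← div_eq_mul_inv, le_div_iff₀ (by positivity)]
    calc ‖h (y + u)‖ * (1 + ‖u‖) ^ k ≤ ‖h (y + u)‖ * ((1 + R) * (1 + ‖y + u‖)) ^ k := by
          gcongr
      _ = ((1 + ‖y + u‖) ^ k * ‖h (y + u)‖) * (1 + R) ^ k := by rw [mul_pow]; ring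
      _ ≤ C * (1 + R) ^ k := by gcongr; exact hC _

theorem moyal_hasFDerivAt (n : ℕ) (Θ : Matrix (Fin n) (Fin n) ℝ)
    (f g : SchwartzMap (Fin n → ℝ) ℂ) (x : Fin n → ℝ) :
    ∃ L : (Fin n → ℝ) →L[ℝ] ℂ, HasFDerivAt (moyal n Θ ⇑f ⇑g) L x ∧
      ∀ w, L w = moyal n Θ (fun y => fderiv ℝ (⇑f) y w) (⇑g) x +
            moyal n Θ (⇑f) (fun y => fderiv ℝ (⇑g) y w) x := by
  set f' := SchwartzMap.fderivCLM ℝ (Fin n → ℝ) ℂ f with hf'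
  set g' := SchwartzMap.fderivCLM ℝ (Fin n → ℝ) ℂ g with hg'
  have ef : ∀ y, fderiv ℝ f y = f' y := fun y => rfl
  have eg : ∀ y, fderiv ℝ g y = g' y := fun y => rfl
  obtain ⟨Bf, hBf, Bf0, Bfb⟩ := schwartz_bound f x
  obtain ⟨Bg, hBg, Bg0, Bgb⟩ := schwartz_bound g x
  obtain ⟨Df, hDf, Df0, Dfb⟩ := schwartz_bound f' x
  obtain ⟨Dg, hDg, Dg0, Dgb⟩ := schwartz_bound g' x
  let G : (Fin n → ℝ) → (Fin n → ℝ) × (Fin n → ℝ) → ((Fin n → ℝ) →L[ℝ] ℂ) := fun y p =>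
    mker n Θ p • (f (y + p.1) • g' (y + p.2) + g (y + p.2) • f' (y + p.1))
  have hb : ∀ y ∈ Metric.ball x 1, ∀ p, ‖G y p‖ ≤ Bf p.1 * Dg p.2 + Df p.1 * Bg p.2 := by
    intro y hy p
    simp only [G]
    rw [norm_smul, mker_norm, one_mul]
    refine (norm_add_le _ _).trans ?_
    rw [norm_smul, norm_smul, mul_comm ‖g _‖]
    exact add_le_add (mul_le_mul (Bfb y hy _) (Dgb y hy _) (norm_nonneg _) (Bf0 _))
      (mul_le_mul (Dfb y hy _) (Bgb y hy _) (norm_nonneg _) (Df0 _))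
  have hbi : Integrable (fun p : (Fin n → ℝ) × (Fin n → ℝ) =>
      Bf p.1 * Dg p.2 + Df p.1 * Bg p.2) (volume.prod volume) :=
    (hBf.mul_prod hDg).add (hDf.mul_prod hBg)
  have hGc : Continuous (G x) := by
    have := mker_cont n Θ
    have h1 := f.continuous
    have h2 := g.continuous
    have h3 := f'.continuous
    have h4 := g'.continuous
    simp only [G]
    fun_prop
  have hGi : Integrable (G x) (volume.prod volume) :=
    hbi.mono' hGc.aestronglyMeasurable
      (Filter.Eventually.of_forall (hb x (Metric.mem_ball_self one_pos)))
  have key : HasFDerivAt (fun y => ∫ p : (Fin n → ℝ) × (Fin n → ℝ),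
      f (y + p.1) * g (y + p.2) * mker n Θ p ∂(volume.prod volume))
      (∫ p, G x p ∂(volume.prod volume)) x := by
    refine hasFDerivAt_integral_of_dominated_of_fderiv_le (𝕜 := ℝ)
      (Metric.ball_mem_nhds x one_pos)
      (Filter.Eventually.of_forall fun y =>
        (mker_integrable n Θ f g f.integrable g.integrable y).aestronglyMeasurable)
      (mker_integrable n Θ f g f.integrable g.integrable x) hGc.aestronglyMeasurable
      (Filter.Eventually.of_forall fun p y hy => hb y hy p) hbi
      (Filter.Eventually.of_forall fun p y hy => ?_)
    have h1 : HasFDerivAt (fun y => f (y + p.1)) (f' (y + p.1)) y := by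
      rw [hasFDerivAt_comp_add_right]
      exact (f.differentiableAt).hasFDerivAt
    have h2 : HasFDerivAt (fun y => g (y + p.2)) (g' (y + p.2)) y := by
      rw [hasFDerivAt_comp_add_right]
      exact (g.differentiableAt).hasFDerivAt
    exact (h1.mul h2).mul_const (mker n Θ p)
  refine ⟨(((π ^ n * |Θ.det|)⁻¹ : ℝ) : ℂ) • ∫ p, G x p ∂(volume.prod volume), ?_, ?_⟩
  · have : moyal n Θ f g = fun y => (((π ^ n * |Θ.det|)⁻¹ : ℝ) : ℂ) *
      ∫ p : (Fin n → ℝ) × (Fin n → ℝ),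
        f (y + p.1) * g (y + p.2) * mker n Θ p ∂(volume.prod volume) :=
      funext fun y => moyal_eq n Θ f g f.integrable g.integrable y
    rw [this]
    exact key.const_mul _
  · intro w
    have if' : Integrable (fun y => fderiv ℝ f y w) :=
      (f'.integrable (μ := volume)).apply_continuousLinearMap w
    have ig' : Integrable (fun y => fderiv ℝ g y w) :=
      (g'.integrable (μ := volume)).apply_continuousLinearMap w
    rw [moyal_eq n Θ _ _ if' g.integrable, moyal_eq n Θ _ _ f.integrable ig', ← mul_add,
      ← integral_add (mker_integrable n Θ _ _ if' g.integrable x)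
        (mker_integrable n Θ _ _ f.integrable ig' x), ContinuousLinearMap.smul_apply,
      ContinuousLinearMap.integral_apply hGi, smul_eq_mul]
    congr 1
    refine integral_congr_ae (Filter.Eventually.of_forall fun p => ?_)
    simp only [G, ef, eg, ContinuousLinearMap.smul_apply, ContinuousLinearMap.add_apply,
      smul_eq_mul]
    ring

/-- Leibniz rule for the Moyal product: `f ⋆_Θ g` is differentiable and
`∂_j (f ⋆_Θ g) = (∂_j f) ⋆_Θ g + f ⋆_Θ (∂_j g)`. -/
theorem moyal_leibniz
    (n : ℕ) (hn : 0 < n) (he : Even n)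
    (Θ : Matrix (Fin n) (Fin n) ℝ) (hskew : Θ.transpose = -Θ)
    (hdet : IsUnit Θ.det)
    (f g : SchwartzMap (Fin n → ℝ) ℂ) (j : Fin n) :
    (∀ x : Fin n → ℝ, DifferentiableAt ℝ (moyal n Θ ⇑f ⇑g) x) ∧
      ∀ x : Fin n → ℝ,
        fderiv ℝ (moyal n Θ ⇑f ⇑g) x (Pi.single j 1) =
          moyal n Θ (fun y => fderiv ℝ (⇑f) y (Pi.single j 1)) (⇑g) x +
            moyal n Θ (⇑f) (fun y => fderiv ℝ (⇑g) y (Pi.single j 1)) x := by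
  refine ⟨fun x => ?_, fun x => ?_⟩
  · obtain ⟨L, hL, -⟩ := moyal_hasFDerivAt n Θ f g x
    exact hL.differentiableAt
  · obtain ⟨L, hL, h⟩ := moyal_hasFDerivAt n Θ f g x
    rw [hL.fderiv, h]
end

section
/- Let n be an even positive integer and Θ an invertible real skew-symmetric n×n matrix. For all Schwartz functions f, g, h ∈ 𝒮(ℝ^n, ℂ), the Moyal products f ⋆_Θ g and g ⋆_Θ h are again Schwartz functions, and the Moyal product is associative: ((f ⋆_Θ g) ⋆_Θ h)(x) = (f ⋆_Θ (g ⋆_Θ h))(x) for all x ∈ ℝ^n. -/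
open MeasureTheory Real

section Aux
open scoped ContDiff

theorem moyalAux_bound {E V F : Type} [NormedAddCommGroup E] [NormedSpace ℝ E]
    [NormedAddCommGroup V] [NormedSpace ℝ V] [NormedAddCommGroup F] [NormedSpace ℝ F]
    (Φ : SchwartzMap (E × V) F) (k r : ℕ) :
    ∃ C : ℝ, ∀ x u, ‖x‖ ^ k * ‖Φ (x, u)‖ ≤ C * (1 + ‖u‖) ^ (-(r : ℝ)) := by
  refine ⟨2 ^ (k + r) * ((Finset.Iic ((k + r, 0) : ℕ × ℕ)).sup
    (schwartzSeminormFamily ℝ (E × V) F)) Φ, fun x u => ?_⟩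
  have h := SchwartzMap.one_add_le_sup_seminorm_apply (𝕜 := ℝ) (m := (k + r, 0)) (k := k + r)
    (n := 0) le_rfl le_rfl Φ (x, u)
  rw [norm_iteratedFDeriv_zero] at h
  rw [Real.rpow_neg (by positivity), Real.rpow_natCast, ← div_eq_mul_inv,
    le_div_iff₀ (by positivity)]
  refine le_trans ?_ h
  have h1 : ‖x‖ ≤ 1 + ‖(x, u)‖ := (norm_fst_le (x, u)).trans (by linarith)
  have h2 : 1 + ‖u‖ ≤ 1 + ‖(x, u)‖ := by linarith [norm_snd_le (x, u)]
  calc ‖x‖ ^ k * ‖Φ (x, u)‖ * (1 + ‖u‖) ^ r = ‖x‖ ^ k * (1 + ‖u‖) ^ r * ‖Φ (x, u)‖ := by ring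
    _ ≤ (1 + ‖(x, u)‖) ^ k * (1 + ‖(x, u)‖) ^ r * ‖Φ (x, u)‖ := by gcongr
    _ = _ := by rw [pow_add]

theorem moyalAux_integrable {E V F : Type} [NormedAddCommGroup E] [NormedSpace ℝ E]
    [NormedAddCommGroup V] [NormedSpace ℝ V] [NormedAddCommGroup F] [NormedSpace ℝ F]
    [FiniteDimensional ℝ V] [MeasureSpace V] [BorelSpace V]
    [(volume : Measure V).IsAddHaarMeasure]
    (Φ : SchwartzMap (E × V) F) (x : E) : Integrable (fun u => Φ (x, u)) := by
  set r := (volume : Measure V).integrablePower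
  obtain ⟨C, hC⟩ := moyalAux_bound Φ 0 r
  have hi := (Measure.integrable_pow_neg_integrablePower (volume : Measure V)).const_mul C
  refine hi.mono' ?_ (Filter.Eventually.of_forall fun u => by simpa using hC x u)
  exact (Φ.continuous.comp (by fun_prop : Continuous fun u : V => (x, u))).aestronglyMeasurable

/-- Partial derivative of a Schwartz function in the first variable. -/
noncomputable def moyalAux_D {E V F : Type} [NormedAddCommGroup E] [NormedSpace ℝ E]
    [NormedAddCommGroup V] [NormedSpace ℝ V] [NormedAddCommGroup F] [NormedSpace ℝ F]
    (Φ : SchwartzMap (E × V) F) : SchwartzMap (E × V) (E →L[ℝ] F) :=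
  SchwartzMap.postcompCLM (𝕜 := ℝ)
    ((ContinuousLinearMap.compL ℝ E (E × V) F).flip (ContinuousLinearMap.inl ℝ E V))
    (SchwartzMap.fderivCLM ℝ (E × V) F Φ)

theorem moyalAux_D_apply {E V F : Type} [NormedAddCommGroup E] [NormedSpace ℝ E]
    [NormedAddCommGroup V] [NormedSpace ℝ V] [NormedAddCommGroup F] [NormedSpace ℝ F]
    (Φ : SchwartzMap (E × V) F) (p : E × V) :
    moyalAux_D Φ p = (fderiv ℝ Φ p).comp (ContinuousLinearMap.inl ℝ E V) := by
  simp [moyalAux_D]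

theorem moyalAux_hasFDerivAt {E V F : Type} [NormedAddCommGroup E] [NormedSpace ℝ E]
    [NormedAddCommGroup V] [NormedSpace ℝ V] [NormedAddCommGroup F] [NormedSpace ℝ F]
    [FiniteDimensional ℝ V] [MeasureSpace V] [BorelSpace V]
    [(volume : Measure V).IsAddHaarMeasure]
    (Φ : SchwartzMap (E × V) F) (x : E) :
    HasFDerivAt (fun x => ∫ u, Φ (x, u)) (∫ u, moyalAux_D Φ (x, u)) x := by
  set r := (volume : Measure V).integrablePower
  obtain ⟨C, hC⟩ := moyalAux_bound (moyalAux_D Φ) 0 r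
  have hi := (Measure.integrable_pow_neg_integrablePower (volume : Measure V)).const_mul C
  refine hasFDerivAt_integral_of_dominated_of_fderiv_le (F := fun x u => Φ (x, u))
    (F' := fun x u => moyalAux_D Φ (x, u)) (s := Set.univ) (Filter.univ_mem) ?_ 
    (moyalAux_integrable Φ x) (moyalAux_integrable (moyalAux_D Φ) x).aestronglyMeasurable
    (Filter.Eventually.of_forall fun u y _ => by simpa using hC y u) hi
    (Filter.Eventually.of_forall fun u y _ => ?_)
  · exact Filter.Eventually.of_forall fun y => (moyalAux_integrable Φ y).aestronglyMeasurable
  · rw [moyalAux_D_apply]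
    have h1 : HasFDerivAt Φ (fderiv ℝ Φ (y, u)) (y, u) := Φ.differentiableAt.hasFDerivAt
    exact h1.comp y (hasFDerivAt_prodMk_left y u)

theorem moyalAux_main {E V : Type} [NormedAddCommGroup E] [NormedSpace ℝ E]
    [NormedAddCommGroup V] [NormedSpace ℝ V] 
    [FiniteDimensional ℝ V] [MeasureSpace V] [BorelSpace V]
    [(volume : Measure V).IsAddHaarMeasure] (m : ℕ) : 
    ∀ {F : Type} [NormedAddCommGroup F] [NormedSpace ℝ F] (Φ : SchwartzMap (E × V) F),
    ContDiff ℝ m (fun x => ∫ u, Φ (x, u)) ∧ 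
    ∀ k : ℕ, ∃ C, ∀ x, ‖x‖ ^ k * ‖iteratedFDeriv ℝ m (fun x => ∫ u, Φ (x, u)) x‖ ≤ C := by
  induction m with
  | zero =>
    intro F _ _ Φ
    refine ⟨contDiff_zero.2 ?_, fun k => ?_⟩
    · exact continuous_iff_continuousAt.2 fun x => (moyalAux_hasFDerivAt Φ x).continuousAt
    · set r := (volume : Measure V).integrablePower
      obtain ⟨C, hC⟩ := moyalAux_bound Φ k r
      have hi := (Measure.integrable_pow_neg_integrablePower (volume : Measure V)).const_mul C
      refine ⟨∫ u : V, C * (1 + ‖u‖) ^ (-(r : ℝ)), fun x => ?_⟩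
      rw [norm_iteratedFDeriv_zero]
      calc ‖x‖ ^ k * ‖∫ u, Φ (x, u)‖ ≤ ‖x‖ ^ k * ∫ u, ‖Φ (x, u)‖ := by
            gcongr; exact norm_integral_le_integral_norm _
        _ = ∫ u, ‖x‖ ^ k * ‖Φ (x, u)‖ := (integral_const_mul _ _).symm
        _ ≤ _ := integral_mono ((moyalAux_integrable Φ x).norm.const_mul _) hi (fun u => hC x u)
  | succ m ih =>
    intro F _ _ Φ
    have hd : fderiv ℝ (fun x => ∫ u, Φ (x, u)) = fun x => ∫ u, moyalAux_D Φ (x, u) :=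
      funext fun x => (moyalAux_hasFDerivAt Φ x).fderiv
    obtain ⟨h1, h2⟩ := ih (moyalAux_D Φ)
    refine ⟨?_, fun k => ?_⟩
    · have := (contDiff_succ_iff_fderiv (𝕜 := ℝ) (n := (m : WithTop ℕ∞))
        (f := fun x => ∫ u, Φ (x, u))).2
        ⟨fun x => (moyalAux_hasFDerivAt Φ x).differentiableAt, by simp, by rw [hd]; exact h1⟩
      exact_mod_cast this
    · obtain ⟨C, hC⟩ := h2 k
      refine ⟨C, fun x => ?_⟩
      rw [← norm_iteratedFDeriv_fderiv, hd]
      exact hC x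

theorem moyalAux_partial {E V F : Type} [NormedAddCommGroup E] [NormedSpace ℝ E]
    [NormedAddCommGroup V] [NormedSpace ℝ V] [NormedAddCommGroup F] [NormedSpace ℝ F]
    [FiniteDimensional ℝ V] [MeasureSpace V] [BorelSpace V]
    [(volume : Measure V).IsAddHaarMeasure]
    (Φ : SchwartzMap (E × V) F) : ∃ P : SchwartzMap E F, ∀ x, P x = ∫ u, Φ (x, u) :=
  ⟨⟨fun x => ∫ u, Φ (x, u), contDiff_infty.2 fun m => (moyalAux_main m Φ).1,
    fun k m => (moyalAux_main m Φ).2 k⟩, fun _ => rfl⟩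

theorem moyalAux_fst {E V F : Type} [NormedAddCommGroup E] [NormedSpace ℝ E]
    [NormedAddCommGroup V] [NormedSpace ℝ V] [NormedAddCommGroup F] [NormedSpace ℝ F]
    (L : V →L[ℝ] E) (hL : ‖L‖ ≤ 1) (f : SchwartzMap E F) (m : ℕ) (p : V) :
    ‖iteratedFDeriv ℝ m (fun p => f (L p)) p‖ ≤ ‖iteratedFDeriv ℝ m f (L p)‖ := by
  have := L.iteratedFDeriv_comp_right (f := f) (f.smooth ⊤) p (i := m) (by exact_mod_cast le_top)
  change ‖iteratedFDeriv ℝ m (f ∘ L) p‖ ≤ _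
  rw [this]
  refine (ContinuousMultilinearMap.norm_compContinuousLinearMap_le _ _).trans ?_
  refine mul_le_of_le_one_right (norm_nonneg _) ?_
  exact Finset.prod_le_one (fun _ _ => norm_nonneg _) (fun _ _ => hL)

theorem moyalAux_tensor {E V : Type} [NormedAddCommGroup E] [NormedSpace ℝ E]
    [NormedAddCommGroup V] [NormedSpace ℝ V] (f : SchwartzMap E ℂ) (g : SchwartzMap V ℂ) :
    ∃ T : SchwartzMap (E × V) ℂ, ∀ p, T p = f p.1 * g p.2 := by
  have hf : ContDiff ℝ ∞ (fun p : E × V => f p.1) := (f.smooth ⊤).comp contDiff_fst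
  have hg : ContDiff ℝ ∞ (fun p : E × V => g p.2) := (g.smooth ⊤).comp contDiff_snd
  refine ⟨⟨fun p => f p.1 * g p.2, hf.mul hg, fun k m => ?_⟩, fun _ => rfl⟩
  refine ⟨∑ i ∈ Finset.range (m + 1), (m.choose i : ℝ) *
    (SchwartzMap.seminorm ℝ k i f * SchwartzMap.seminorm ℝ 0 (m - i) g +
     SchwartzMap.seminorm ℝ 0 i f * SchwartzMap.seminorm ℝ k (m - i) g), fun p => ?_⟩
  have h := norm_iteratedFDeriv_mul_le (𝕜 := ℝ) hf hg p (n := m) (by exact_mod_cast le_top)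
  refine (mul_le_mul_of_nonneg_left h (by positivity)).trans ?_
  · · 
      rw [Finset.mul_sum]
      refine Finset.sum_le_sum fun i _ => ?_
      have h1 := moyalAux_fst (ContinuousLinearMap.fst ℝ E V)
        (ContinuousLinearMap.norm_fst_le ℝ E V) f i p
      have h2 := moyalAux_fst (ContinuousLinearMap.snd ℝ E V)
        (ContinuousLinearMap.norm_snd_le ℝ E V) g (m - i) p
      simp only [ContinuousLinearMap.coe_fst', ContinuousLinearMap.coe_snd'] at h1 h2
      have hp : ‖p‖ ^ k ≤ ‖p.1‖ ^ k + ‖p.2‖ ^ k := by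
        rw [Prod.norm_def]
        rcases max_choice ‖p.1‖ ‖p.2‖ with h | h <;> rw [h]
        · exact le_add_of_nonneg_right (by positivity)
        · exact le_add_of_nonneg_left (by positivity)
      have a1 := f.le_seminorm ℝ k i p.1
      have a2 := f.norm_iteratedFDeriv_le_seminorm ℝ i p.1
      have b1 := g.le_seminorm ℝ k (m - i) p.2
      have b2 := g.norm_iteratedFDeriv_le_seminorm ℝ (m - i) p.2
      calc _ ≤ (‖p.1‖ ^ k + ‖p.2‖ ^ k) * ((m.choose i : ℝ) * ‖iteratedFDeriv ℝ i f p.1‖ *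
              ‖iteratedFDeriv ℝ (m - i) g p.2‖) := by gcongr
        _ = (m.choose i : ℝ) * ((‖p.1‖ ^ k * ‖iteratedFDeriv ℝ i f p.1‖) *
              ‖iteratedFDeriv ℝ (m - i) g p.2‖ + ‖iteratedFDeriv ℝ i f p.1‖ *
              (‖p.2‖ ^ k * ‖iteratedFDeriv ℝ (m - i) g p.2‖)) := by ring
        _ ≤ _ := by gcongr

theorem moyalAux_exp : Function.HasTemperateGrowth
    (fun t : ℝ => Complex.exp (2 * Complex.I * (t : ℂ))) := by
  have key : ∀ m : ℕ, iteratedDeriv m (fun t : ℝ => Complex.exp (2 * Complex.I * (t : ℂ))) =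
      fun t : ℝ => (2 * Complex.I) ^ m * Complex.exp (2 * Complex.I * (t : ℂ)) := by
    intro m
    induction m with
    | zero => simp
    | succ m ih =>
      rw [iteratedDeriv_succ, ih]
      ext t
      have h0 : HasDerivAt (fun t : ℝ => 2 * Complex.I * (t : ℂ)) (2 * Complex.I * 1) t :=
        (Complex.ofRealCLM.hasDerivAt (x := t)).const_mul _
      have := (h0.cexp.const_mul ((2 * Complex.I) ^ m)).deriv
      rw [this]; ring
  refine ⟨?_, fun m => ⟨0, 2 ^ m, fun t => ?_⟩⟩
  · exact Complex.contDiff_exp.comp (contDiff_const.mul Complex.ofRealCLM.contDiff)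
  · rw [norm_iteratedFDeriv_eq_norm_iteratedDeriv, key]
    have : Complex.exp (2 * Complex.I * (t : ℂ)) = Complex.exp (((2 * t : ℝ) : ℂ) * Complex.I) := by
      push_cast; ring_nf
    simp [this, -Complex.ofReal_mul, Complex.norm_exp_ofReal_mul_I]



/-- The bilinear form in the exponent. -/
noncomputable def moyalB (n : ℕ) (J : Matrix (Fin n) (Fin n) ℝ) (u v : Fin n → ℝ) : ℝ :=
  ∑ i, u i * J.mulVec v i

/-- The oscillating phase. -/
noncomputable def moyalE (t : ℝ) : ℂ := Complex.exp (2 * Complex.I * (t : ℂ))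

theorem moyalE_add (s t : ℝ) : moyalE (s + t) = moyalE s * moyalE t := by
  rw [moyalE, moyalE, moyalE, ← Complex.exp_add]; push_cast; ring_nf

theorem moyalE_norm (t : ℝ) : ‖moyalE t‖ = 1 := by
  have : moyalE t = Complex.exp (((2 * t : ℝ) : ℂ) * Complex.I) := by
    rw [moyalE]; push_cast; ring_nf
  rw [this, Complex.norm_exp_ofReal_mul_I]

theorem moyalE_cont : Continuous moyalE := by
  unfold moyalE; fun_prop

theorem moyalB_add_left (n : ℕ) (J : Matrix (Fin n) (Fin n) ℝ) (u u' v : Fin n → ℝ) :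
    moyalB n J (u + u') v = moyalB n J u v + moyalB n J u' v := by
  simp [moyalB, add_mul, Finset.sum_add_distrib]

theorem moyalB_add_right (n : ℕ) (J : Matrix (Fin n) (Fin n) ℝ) (u v v' : Fin n → ℝ) :
    moyalB n J u (v + v') = moyalB n J u v + moyalB n J u v' := by
  simp [moyalB, mul_add, Finset.sum_add_distrib, Matrix.mulVec_add]

theorem moyalB_sub_left (n : ℕ) (J : Matrix (Fin n) (Fin n) ℝ) (u u' v : Fin n → ℝ) :
    moyalB n J (u - u') v = moyalB n J u v - moyalB n J u' v := by
  simp [moyalB, sub_mul, Finset.sum_sub_distrib]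

theorem moyalB_sub_right (n : ℕ) (J : Matrix (Fin n) (Fin n) ℝ) (u v v' : Fin n → ℝ) :
    moyalB n J u (v - v') = moyalB n J u v - moyalB n J u v' := by
  simp [moyalB, mul_sub, Finset.sum_sub_distrib, Matrix.mulVec_sub]

theorem moyalB_cont (n : ℕ) (J : Matrix (Fin n) (Fin n) ℝ) :
    Continuous (fun p : (Fin n → ℝ) × (Fin n → ℝ) => moyalB n J p.1 p.2) := by
  unfold moyalB Matrix.mulVec dotProduct; fun_prop

theorem moyalB_cont' {X : Type} [TopologicalSpace X] (n : ℕ) (J : Matrix (Fin n) (Fin n) ℝ)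
    {a b : X → Fin n → ℝ} (ha : Continuous a) (hb : Continuous b) :
    Continuous (fun x => moyalE (moyalB n J (a x) (b x))) :=
  moyalE_cont.comp ((moyalB_cont n J).comp (ha.prodMk hb))

theorem moyalB_temp (n : ℕ) (J : Matrix (Fin n) (Fin n) ℝ) :
    Function.HasTemperateGrowth
      (fun p : (Fin n → ℝ) × (Fin n → ℝ) => moyalB n J p.2 p.1) := by
  unfold moyalB
  refine Function.HasTemperateGrowth.sum fun i _ => Function.HasTemperateGrowth.mul ?_ ?_
  · exact ((ContinuousLinearMap.proj (R := ℝ) (φ := fun _ : Fin n => ℝ) i).comp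
      (ContinuousLinearMap.snd ℝ (Fin n → ℝ) (Fin n → ℝ))).hasTemperateGrowth
  · exact ((ContinuousLinearMap.proj (R := ℝ) (φ := fun _ : Fin n => ℝ) i).comp
      ((LinearMap.toContinuousLinearMap (Matrix.toLin' J)).comp
      (ContinuousLinearMap.fst ℝ (Fin n → ℝ) (Fin n → ℝ)))).hasTemperateGrowth

theorem moyal_fourier (n : ℕ) (J : Matrix (Fin n) (Fin n) ℝ) (hJ : IsUnit J)
    (g : SchwartzMap (Fin n → ℝ) ℂ) :
    ∃ G : SchwartzMap (Fin n → ℝ) ℂ, ∀ u, G u = ∫ w, g w * moyalE (- moyalB n J u w) := by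
  let e : EuclideanSpace ℝ (Fin n) ≃L[ℝ] (Fin n → ℝ) := EuclideanSpace.equiv (Fin n) ℝ
  have hinj : Function.Injective (Matrix.toLin' J.transpose) := by
    have : IsUnit J.transpose := (Matrix.isUnit_transpose J).2 hJ
    exact Matrix.mulVec_injective_of_isUnit this
  let M : (Fin n → ℝ) ≃L[ℝ] (Fin n → ℝ) :=
    (LinearEquiv.ofInjectiveEndo _ hinj).toContinuousLinearEquiv
  have hM : ∀ u, M u = J.transpose.mulVec u := fun u => rfl
  let S : (Fin n → ℝ) ≃L[ℝ] (Fin n → ℝ) :=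
    ContinuousLinearEquiv.smulLeft (Units.mk0 (π⁻¹ : ℝ) (by positivity))
  have hS : ∀ u, S u = π⁻¹ • u := fun u => rfl
  let gE : SchwartzMap (EuclideanSpace ℝ (Fin n)) ℂ :=
    SchwartzMap.compCLMOfContinuousLinearEquiv ℝ e g
  let A : (Fin n → ℝ) ≃L[ℝ] EuclideanSpace ℝ (Fin n) := (M.trans S).trans e.symm
  refine ⟨SchwartzMap.compCLMOfContinuousLinearEquiv ℝ A (FourierTransform.fourier gE),
    fun u => ?_⟩
  have h1 : SchwartzMap.compCLMOfContinuousLinearEquiv ℝ A (FourierTransform.fourier gE) u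
    = FourierTransform.fourier (gE : EuclideanSpace ℝ (Fin n) → ℂ) (A u) := rfl
  rw [h1, Real.fourier_eq']
  rw [← (PiLp.volume_preserving_ofLp (Fin n)).integral_comp
    (MeasurableEquiv.toLp 2 (Fin n → ℝ)).symm.measurableEmbedding]
  refine integral_congr_ae (Filter.Eventually.of_forall fun v => ?_)
  have h2 : gE v = g v.ofLp := rfl
  have h3 : (A u).ofLp = π⁻¹ • J.transpose.mulVec u := rfl
  have h4 : -2 * π * inner ℝ v (A u) = -2 * moyalB n J u v.ofLp := by
    have : inner ℝ v (A u) = π⁻¹ * moyalB n J u v.ofLp := by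
      have h5 : moyalB n J u v.ofLp = u ⬝ᵥ J.mulVec v.ofLp := rfl
      rw [EuclideanSpace.inner_eq_star_dotProduct, h3, h5, star_trivial, smul_dotProduct,
        Matrix.mulVec_transpose, ← Matrix.dotProduct_mulVec, smul_eq_mul]
    rw [this]; field_simp
  simp only [h2, h4, moyalE, smul_eq_mul]
  rw [mul_comm]
  congr 2
  push_cast; ring

theorem moyal_formula (n : ℕ) (Θ : Matrix (Fin n) (Fin n) ℝ) (f g : (Fin n → ℝ) → ℂ)
    (G : (Fin n → ℝ) → ℂ)
    (hG : ∀ u, G u = ∫ w, g w * moyalE (- moyalB n Θ⁻¹ u w)) (x : Fin n → ℝ) :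
    moyal n Θ f g x = (((π ^ n * |Θ.det|)⁻¹ : ℝ) : ℂ) *
      ∫ u, f (x + u) * G u * moyalE (moyalB n Θ⁻¹ u x) := by
  rw [moyal]
  congr 2
  ext u
  have : ∀ v : Fin n → ℝ, f (x + u) * g (x + v) *
        Complex.exp (-2 * Complex.I * ((∑ i, u i * Θ⁻¹.mulVec v i : ℝ) : ℂ)) =
      f (x + u) * moyalE (moyalB n Θ⁻¹ u x) *
        (fun w => g w * moyalE (- moyalB n Θ⁻¹ u w)) (x + v) := by
    intro v
    have h1 : Complex.exp (-2 * Complex.I * ((∑ i, u i * Θ⁻¹.mulVec v i : ℝ) : ℂ)) =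
        moyalE (moyalB n Θ⁻¹ u x + - moyalB n Θ⁻¹ u (x + v)) := by
      rw [moyalB_add_right, moyalE]
      simp only [moyalB]
      congr 1
      push_cast; ring
    rw [h1, moyalE_add]
    ring
  simp_rw [this]
  rw [integral_const_mul, integral_add_left_eq_self
    (fun w => g w * moyalE (- moyalB n Θ⁻¹ u w)) x, ← hG]
  ring

theorem moyal_shear (n : ℕ) (f g : SchwartzMap (Fin n → ℝ) ℂ) :
    ∃ T : SchwartzMap ((Fin n → ℝ) × (Fin n → ℝ)) ℂ, ∀ p, T p = f (p.1 + p.2) * g p.2 := by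
  obtain ⟨T, hT⟩ := moyalAux_tensor f g
  let p1 := ContinuousLinearMap.fst ℝ (Fin n → ℝ) (Fin n → ℝ)
  let p2 := ContinuousLinearMap.snd ℝ (Fin n → ℝ) (Fin n → ℝ)
  let sh : ((Fin n → ℝ) × (Fin n → ℝ)) ≃L[ℝ] ((Fin n → ℝ) × (Fin n → ℝ)) :=
    ContinuousLinearEquiv.equivOfInverse ((p1 + p2).prod p2) ((p1 - p2).prod p2)
      (fun p => by ext <;> simp [p1, p2]) (fun p => by ext <;> simp [p1, p2])
  refine ⟨SchwartzMap.compCLMOfContinuousLinearEquiv ℝ sh T, fun p => ?_⟩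
  exact hT (p.1 + p.2, p.2)

theorem moyal_schwartz (n : ℕ) (Θ : Matrix (Fin n) (Fin n) ℝ) (hJ : IsUnit Θ⁻¹)
    (f g : SchwartzMap (Fin n → ℝ) ℂ) :
    ∃ fg : SchwartzMap (Fin n → ℝ) ℂ, ⇑fg = moyal n Θ ⇑f ⇑g := by
  obtain ⟨G, hG⟩ := moyal_fourier n Θ⁻¹ hJ g
  obtain ⟨T, hT⟩ := moyal_shear n f G
  have hE : Function.HasTemperateGrowth
      (fun p : (Fin n → ℝ) × (Fin n → ℝ) => moyalE (moyalB n Θ⁻¹ p.2 p.1)) :=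
    moyalAux_exp.comp (moyalB_temp n Θ⁻¹)
  obtain ⟨P, hP⟩ := moyalAux_partial (SchwartzMap.smulLeftCLM ℂ
    (fun p : (Fin n → ℝ) × (Fin n → ℝ) => moyalE (moyalB n Θ⁻¹ p.2 p.1))
    T)
  refine ⟨(((π ^ n * |Θ.det|)⁻¹ : ℝ) : ℂ) • P, funext fun x => ?_⟩
  rw [moyal_formula n Θ f g G hG x]
  change (((π ^ n * |Θ.det|)⁻¹ : ℝ) : ℂ) • P x = _
  rw [hP, smul_eq_mul]
  congr 2
  ext u
  rw [SchwartzMap.smulLeftCLM_apply_apply hE]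
  simp only [hT, smul_eq_mul]
  ring

theorem moyal_K (n : ℕ) (Θ : Matrix (Fin n) (Fin n) ℝ) 
    (g H : SchwartzMap (Fin n → ℝ) ℂ) (G gh : (Fin n → ℝ) → ℂ) (c : ℂ)
    (hG : ∀ u, G u = ∫ w, g w * moyalE (- moyalB n Θ⁻¹ u w))
    (hgh : ∀ w, gh w = c * ∫ u, g (w + u) * H u * moyalE (moyalB n Θ⁻¹ u w)) (t : Fin n → ℝ) :
    ∫ w, gh w * moyalE (- moyalB n Θ⁻¹ t w) =
      c * ∫ u, G (t - u) * H u * moyalE (moyalB n Θ⁻¹ (t - u) u) := by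
  have h1 : ∀ w, gh w * moyalE (- moyalB n Θ⁻¹ t w) = c * ∫ u, g (w + u) * H u *
      moyalE (moyalB n Θ⁻¹ u w) * moyalE (- moyalB n Θ⁻¹ t w) := by
    intro w; rw [hgh, integral_mul_const]; ring
  simp_rw [h1]
  rw [integral_const_mul]
  congr 1
  have hint : Integrable (fun p : (Fin n → ℝ) × (Fin n → ℝ) => g (p.1 + p.2) * H p.2)
      (volume.prod volume) := by
    obtain ⟨T, hT⟩ := moyal_shear n g H
    haveI i1 : ((volume : Measure (Fin n → ℝ)).prod
        (volume : Measure (Fin n → ℝ))).IsAddHaarMeasure :=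
      Measure.prod.instIsAddHaarMeasure _ _
    haveI i2 : ((volume : Measure (Fin n → ℝ)).prod
        (volume : Measure (Fin n → ℝ))).HasTemperateGrowth :=
      Measure.IsAddHaarMeasure.instHasTemperateGrowth
    have h := T.integrable (μ := (volume : Measure (Fin n → ℝ)).prod (volume : Measure (Fin n → ℝ)))
    rw [funext hT] at h
    exact h
  rw [integral_integral_swap]
  · congr 1
    ext u
    have h2 : ∀ w, g (w + u) * H u * moyalE (moyalB n Θ⁻¹ u w) * moyalE (- moyalB n Θ⁻¹ t w) =
        H u * moyalE (moyalB n Θ⁻¹ (t - u) u) *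
          (fun w => g w * moyalE (- moyalB n Θ⁻¹ (t - u) w)) (w + u) := by
      intro w
      have : moyalE (moyalB n Θ⁻¹ u w) * moyalE (- moyalB n Θ⁻¹ t w) =
        moyalE (moyalB n Θ⁻¹ (t - u) u) * moyalE (- moyalB n Θ⁻¹ (t - u) (w + u)) := by
        rw [← moyalE_add, ← moyalE_add]
        congr 1
        simp only [moyalB_sub_left, moyalB_add_right]; ring
      rw [mul_assoc, this]; ring
    simp_rw [h2]
    rw [integral_const_mul, integral_add_right_eq_self
      (fun w => g w * moyalE (- moyalB n Θ⁻¹ (t - u) w)) u, ← hG]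
    ring
  · have hc : Continuous (fun p : (Fin n → ℝ) × (Fin n → ℝ) => g (p.1 + p.2) * H p.2 *
      moyalE (moyalB n Θ⁻¹ p.2 p.1) * moyalE (- moyalB n Θ⁻¹ t p.1)) := by
      have c1 := moyalB_cont' n Θ⁻¹ (continuous_snd (X := Fin n → ℝ) (Y := Fin n → ℝ))
        continuous_fst
      have c2 : Continuous (fun p : (Fin n → ℝ) × (Fin n → ℝ) =>
          moyalE (- moyalB n Θ⁻¹ t p.1)) :=
        moyalE_cont.comp ((moyalB_cont n Θ⁻¹).comp (continuous_const.prodMk continuous_fst)).neg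
      have c3 := g.continuous
      have c4 := H.continuous
      fun_prop
    refine hint.mono hc.aestronglyMeasurable (Filter.Eventually.of_forall fun p => ?_)
    simp [Function.uncurry, moyalE_norm]

theorem moyal_LR (n : ℕ) (Θ : Matrix (Fin n) (Fin n) ℝ) 
    (f G H : SchwartzMap (Fin n → ℝ) ℂ) (x : Fin n → ℝ) :
    ∫ u, (∫ s, f (x + u + s) * G s * moyalE (moyalB n Θ⁻¹ s (x + u))) * H u *
        moyalE (moyalB n Θ⁻¹ u x) =
    ∫ t, f (x + t) * (∫ u, G (t - u) * H u * moyalE (moyalB n Θ⁻¹ (t - u) u)) *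
        moyalE (moyalB n Θ⁻¹ t x) := by
  have h1 : ∀ u, (∫ s, f (x + u + s) * G s * moyalE (moyalB n Θ⁻¹ s (x + u))) * H u *
        moyalE (moyalB n Θ⁻¹ u x) = ∫ t, f (x + t) * (G (t - u) * H u *
        moyalE (moyalB n Θ⁻¹ (t - u) u)) * moyalE (moyalB n Θ⁻¹ t x) := by
    intro u
    rw [← integral_add_right_eq_self (fun t => f (x + t) * (G (t - u) * H u *
        moyalE (moyalB n Θ⁻¹ (t - u) u)) * moyalE (moyalB n Θ⁻¹ t x)) u, ← integral_mul_const, ← integral_mul_const]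
    congr 1
    ext s
    have : moyalE (moyalB n Θ⁻¹ s (x + u)) * moyalE (moyalB n Θ⁻¹ u x) =
        moyalE (moyalB n Θ⁻¹ s u) * moyalE (moyalB n Θ⁻¹ (s + u) x) := by
      rw [← moyalE_add, ← moyalE_add]
      congr 1
      simp only [moyalB_add_left, moyalB_add_right]; ring
    rw [add_sub_cancel_right, mul_right_comm _ _ (H u), mul_assoc _ _ (moyalE (moyalB n Θ⁻¹ u x)),
      this, show x + u + s = x + (s + u) by abel]
    ring
  simp_rw [h1]
  have hint : Integrable (fun p : (Fin n → ℝ) × (Fin n → ℝ) => H p.2 * G (p.1 - p.2))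
      (volume.prod volume) := 
    (H.integrable (μ := volume)).convolution_integrand (ContinuousLinearMap.mul ℝ ℂ)
      (G.integrable (μ := volume))
  rw [integral_integral_swap]
  · congr 1
    ext t
    rw [integral_mul_const, integral_const_mul]
  · have c3 := f.continuous
    have c4 := H.continuous
    have c5 := G.continuous
    have hc : Continuous (fun p : (Fin n → ℝ) × (Fin n → ℝ) => f (x + p.2) * (G (p.2 - p.1) *
      H p.1 * moyalE (moyalB n Θ⁻¹ (p.2 - p.1) p.1)) * moyalE (moyalB n Θ⁻¹ p.2 x)) := by
      have c1 := moyalB_cont' n Θ⁻¹ ((continuous_snd (X := Fin n → ℝ) (Y := Fin n → ℝ)).sub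
        continuous_fst) continuous_fst
      have c2 := moyalB_cont' n Θ⁻¹ (continuous_snd (X := Fin n → ℝ) (Y := Fin n → ℝ))
        (continuous_const (y := x))
      fun_prop
    refine (hint.swap.norm.const_mul (SchwartzMap.seminorm ℝ 0 0 f)).mono'
      hc.aestronglyMeasurable (Filter.Eventually.of_forall fun p => ?_)
    have := f.norm_le_seminorm ℝ (x + p.2)
    simp only [Function.uncurry, norm_mul, moyalE_norm, mul_one, Function.comp, Prod.swap]
    rw [mul_comm ‖G _‖]
    gcongr

end Aux

/-- The Moyal product of Schwartz functions is Schwartz, and the Moyal product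
is associative: `(f ⋆_Θ g) ⋆_Θ h = f ⋆_Θ (g ⋆_Θ h)`. -/
theorem moyal_assoc
    (n : ℕ) (hn : 0 < n) (he : Even n)
    (Θ : Matrix (Fin n) (Fin n) ℝ) (hskew : Θ.transpose = -Θ)
    (hdet : IsUnit Θ.det)
    (f g h : SchwartzMap (Fin n → ℝ) ℂ) :
    (∃ fg : SchwartzMap (Fin n → ℝ) ℂ, ⇑fg = moyal n Θ ⇑f ⇑g) ∧
      (∃ gh : SchwartzMap (Fin n → ℝ) ℂ, ⇑gh = moyal n Θ ⇑g ⇑h) ∧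
      ∀ x : Fin n → ℝ,
        moyal n Θ (moyal n Θ ⇑f ⇑g) (⇑h) x =
          moyal n Θ (⇑f) (moyal n Θ ⇑g ⇑h) x := by
  have hJ : IsUnit Θ⁻¹ := Matrix.isUnit_nonsing_inv_iff.2 ((Matrix.isUnit_iff_isUnit_det Θ).2 hdet)
  refine ⟨moyal_schwartz n Θ hJ f g, moyal_schwartz n Θ hJ g h, fun x => ?_⟩
  obtain ⟨G, hG⟩ := moyal_fourier n Θ⁻¹ hJ g
  obtain ⟨H, hH⟩ := moyal_fourier n Θ⁻¹ hJ h
  have hK := moyal_K n Θ g H G (moyal n Θ g h) _ hG (moyal_formula n Θ g h H hH)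
  rw [moyal_formula n Θ _ h H hH x, moyal_formula n Θ f _ _ (fun t => (hK t).symm) x]
  simp_rw [moyal_formula n Θ f g G hG]
  have h1 := moyal_LR n Θ f G H x
  congr 1
  have e1 : ∀ (c a b d : ℂ), c * a * b * d = c * (a * b * d) := by intros; ring
  have e2 : ∀ (c a b d : ℂ), a * (c * b) * d = c * (a * b * d) := by intros; ring
  simp_rw [e1 ((((π ^ n * |Θ.det|)⁻¹ : ℝ) : ℂ)), e2 ((((π ^ n * |Θ.det|)⁻¹ : ℝ) : ℂ))]
  rw [integral_const_mul, integral_const_mul, h1]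
end
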